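/- arXiv:2605.26592 — 6 statements merged into one kernel-verified Lean document; each statement's English description precedes it below -/
import Mathlib

section
/- Let k ≥ 2, s = (s_0,…,s_{k−1})ᵀ ∈ ℝ^k, and γ > 0. Then the following are equivalent: (i) there exists an upper triangular PSD matrix G ∈ ℝ^{(k−1)×(k−1)} such that xᵀU(s,G)x ≥ γx_1² for every x = (x_1,…,x_k)ᵀ ∈ ℝ^k; (iv) Σ_{m=0}^{k−1} s_m T_m(x) ≥ γ for all x ∈ [−1,1]. -/
/-!
For `θ` real, evaluate the form of `U(s, G)` at the vectors `(cos mθ)_m` and `(sin mθ)_m` and add: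
the two copies of `G` cancel, because the index shift acts on `(cos mθ, sin mθ)` as a rotation, and
`∑ s_m cos mθ = ∑ s_m T_m(cos θ)` remains (`Umat_form_cos_add_sin`). This gives (i) ⇒ (iv).

For the converse, the polynomial `p = ∑ s_m T_m - γ` is nonnegative on `[-1, 1]`, so `p(cos θ)` is a
finite sum of squares `|q(e^{iθ})|²` with `q` real and `deg q ≤ k - 1` (`mem_trigSOS_of_nonneg`).
For a single such `q`, put `H i j = ∑_{l ≥ 1} q_{i+l} q_{j+l}`, a Gram matrix and hence PSD, and let
`G` be the upper triangular matrix with the same quadratic form. A telescoping computation shows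
that the form of `U` is then `(∑ q_i x_i)²`, where `s` collects the autocorrelations of `q`
(`exists_G_of_coeff`); by the cosine–sine identity these are the cosine coefficients of
`|q(e^{iθ})|²`. Feasibility is additive in `s`, and cosine coefficients are unique
(`cos_coeff_unique`), so the sum of these matrices `G` works for `s` itself.
-/

open Matrix

/-- The `m`-th Chebyshev polynomial of the first kind. -/
noncomputable def chebT : ℕ → ℝ → ℝ
  | 0, _ => 1
  | 1, x => x
  | n + 2, x => 2 * x * chebT (n + 1) x - chebT n x

/-- The matrix `U(s, G) = e₁sᵀ − [[G,0],[0ᵀ,0]] + [[0,0ᵀ],[0,G]] ∈ ℝ^{k×k}`, where the first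
row of `e₁sᵀ` is `sᵀ`, `G` is subtracted on the leading principal `(k−1)×(k−1)` block and
added on the trailing principal `(k−1)×(k−1)` block. -/
noncomputable def Umat (k : ℕ) (s : ℕ → ℝ) (G : Matrix (Fin (k - 1)) (Fin (k - 1)) ℝ) :
    Matrix (Fin k) (Fin k) ℝ :=
  fun i j =>
    (if (i : ℕ) = 0 then s (j : ℕ) else 0)
    - (if h : (i : ℕ) < k - 1 ∧ (j : ℕ) < k - 1 then G ⟨(i : ℕ), h.1⟩ ⟨(j : ℕ), h.2⟩ else 0)
    + (if h : 0 < (i : ℕ) ∧ 0 < (j : ℕ) then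
        G ⟨(i : ℕ) - 1, by obtain ⟨h1, h2⟩ := h; have := i.isLt; omega⟩
          ⟨(j : ℕ) - 1, by obtain ⟨h1, h2⟩ := h; have := j.isLt; omega⟩
      else 0)

/-! ### The quadratic form of `U(s, G)` -/

/-- Condition (i) in size `n + 1` with `γ = 0`; the constant `γ` is absorbed into `s 0`. -/
def Feasible (n : ℕ) (s : ℕ → ℝ) : Prop :=
  ∃ G : Matrix (Fin n) (Fin n) ℝ, (∀ i j, j < i → G i j = 0) ∧
    (∀ y : Fin n → ℝ, 0 ≤ y ⬝ᵥ G.mulVec y) ∧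
    ∀ x : Fin (n + 1) → ℝ, 0 ≤ x ⬝ᵥ (Umat (n + 1) s G).mulVec x

lemma Umat_form (n : ℕ) (s : ℕ → ℝ) (G : Matrix (Fin n) (Fin n) ℝ) (x : Fin (n + 1) → ℝ) :
    x ⬝ᵥ (Umat (n + 1) s G).mulVec x = x 0 * ∑ j : Fin (n + 1), s j * x j
      - (fun i : Fin n => x i.castSucc) ⬝ᵥ G.mulVec (fun i => x i.castSucc)
      + (fun i : Fin n => x i.succ) ⬝ᵥ G.mulVec (fun i => x i.succ) := by
  simp only [dotProduct, mulVec, Umat, sub_mul, add_mul, Finset.sum_sub_distrib,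
    Finset.sum_add_distrib, mul_sub, mul_add]
  congr 1
  · congr 1
    · rw [Fin.sum_univ_succ]
      simp
    · rw [Fin.sum_univ_castSucc]
      simp [Fin.sum_univ_castSucc (n := n)]
  · rw [Fin.sum_univ_succ]
    simp [Fin.sum_univ_succ (n := n)]

lemma Feasible.add {n : ℕ} {s t : ℕ → ℝ} (hs : Feasible n s) (ht : Feasible n t) :
    Feasible n (fun m => s m + t m) := by
  obtain ⟨G, hG, hG', hGx⟩ := hs
  obtain ⟨H, hH, hH', hHx⟩ := ht
  refine ⟨G + H, fun i j h => by simp [hG i j h, hH i j h], fun y => ?_, fun x => ?_⟩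
  · rw [add_mulVec, dotProduct_add]
    exact add_nonneg (hG' y) (hH' y)
  · have h := add_nonneg (hGx x) (hHx x)
    simp only [Umat_form, add_mulVec, dotProduct_add, add_mul, Finset.sum_add_distrib] at h ⊢
    linarith

lemma feasible_zero (n : ℕ) : Feasible n (fun _ => 0) :=
  ⟨0, by simp, by simp, fun x => by simp [Umat_form]⟩

/-- Summing the form of `U` over the cosine and the sine vector cancels `G`: shifting the index
rotates the pair `(cos mθ, sin mθ)` by `θ`, which leaves the sum of the two forms of `G`
unchanged. -/
lemma Umat_form_cos_add_sin (n : ℕ) (s : ℕ → ℝ) (G : Matrix (Fin n) (Fin n) ℝ) (θ : ℝ) :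
    (fun i : Fin (n + 1) => Real.cos ((i : ℕ) * θ)) ⬝ᵥ
        (Umat (n + 1) s G).mulVec (fun i => Real.cos ((i : ℕ) * θ))
      + (fun i : Fin (n + 1) => Real.sin ((i : ℕ) * θ)) ⬝ᵥ
        (Umat (n + 1) s G).mulVec (fun i => Real.sin ((i : ℕ) * θ))
      = ∑ m ∈ Finset.range (n + 1), s m * Real.cos (m * θ) := by
  have key : (fun i : Fin n => Real.cos (((i.succ : Fin (n + 1)) : ℕ) * θ)) ⬝ᵥ
        G.mulVec (fun i => Real.cos (((i.succ : Fin (n + 1)) : ℕ) * θ))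
      + (fun i : Fin n => Real.sin (((i.succ : Fin (n + 1)) : ℕ) * θ)) ⬝ᵥ
        G.mulVec (fun i => Real.sin (((i.succ : Fin (n + 1)) : ℕ) * θ))
      = (fun i : Fin n => Real.cos (((i.castSucc : Fin (n + 1)) : ℕ) * θ)) ⬝ᵥ
        G.mulVec (fun i => Real.cos (((i.castSucc : Fin (n + 1)) : ℕ) * θ))
      + (fun i : Fin n => Real.sin (((i.castSucc : Fin (n + 1)) : ℕ) * θ)) ⬝ᵥ
        G.mulVec (fun i => Real.sin (((i.castSucc : Fin (n + 1)) : ℕ) * θ)) := by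
    simp only [dotProduct, mulVec, Finset.mul_sum, ← Finset.sum_add_distrib]
    refine Finset.sum_congr rfl fun i _ => Finset.sum_congr rfl fun j _ => ?_
    simp only [Fin.val_succ, Fin.val_castSucc, Nat.cast_add, Nat.cast_one, add_mul, one_mul,
      Real.cos_add, Real.sin_add]
    linear_combination (G i j * (Real.cos (i * θ) * Real.cos (j * θ)
      + Real.sin (i * θ) * Real.sin (j * θ))) * Real.sin_sq_add_cos_sq θ
  rw [Umat_form, Umat_form, Finset.sum_range]
  simp only [Fin.val_zero, Nat.cast_zero, zero_mul, Real.cos_zero, Real.sin_zero, one_mul]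
  linarith

/-- A symmetric matrix and its upper triangular folding have the same quadratic form. -/
lemma upper_form {n : ℕ} (H : Matrix (Fin n) (Fin n) ℝ) (hH : Hᵀ = H) (y : Fin n → ℝ) :
    y ⬝ᵥ (Matrix.of fun i j => if i < j then 2 * H i j else if i = j then H i j else 0).mulVec y
      = y ⬝ᵥ H.mulVec y := by
  set G : Matrix (Fin n) (Fin n) ℝ :=
    Matrix.of fun i j => if i < j then 2 * H i j else if i = j then H i j else 0 with hG
  have h1 : G + Gᵀ = H + H := by
    ext i j
    have := congrFun (congrFun hH i) j
    simp only [transpose_apply] at this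
    simp only [hG, Matrix.add_apply, transpose_apply, of_apply]
    rcases lt_trichotomy i j with h | h | h
    · simp [h, h.not_gt, h.ne']; ring
    · simp [h]
    · simp [h, h.not_gt, h.ne', this]; ring
  have h2 : y ⬝ᵥ Gᵀ.mulVec y = y ⬝ᵥ G.mulVec y := by
    rw [mulVec_transpose, dotProduct_comm, dotProduct_mulVec]
  have h3 := congrArg (fun M => y ⬝ᵥ M.mulVec y) h1
  simp only [add_mulVec, dotProduct_add, h2] at h3
  linarith

/-- A single square `|q(e^{iθ})|²` is feasible: with `r j = ∑ l, q l * q (l + j)` its cosine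
coefficients are `r 0, 2 r 1, 2 r 2, …`, and the (folded) Gram matrix
`H i j = ∑ l ≥ 1, q (i + l) * q (j + l)` turns the form of `U` into the square `(∑ i, q i * x i)²`. -/
lemma exists_G_of_coeff (n : ℕ) (q : ℕ → ℝ) (hq : ∀ i, n < i → q i = 0) :
    ∃ (s : ℕ → ℝ) (G : Matrix (Fin n) (Fin n) ℝ), (∀ i j, j < i → G i j = 0) ∧
    (∀ y : Fin n → ℝ, 0 ≤ y ⬝ᵥ G.mulVec y) ∧
    ∀ x : Fin (n + 1) → ℝ,
      x ⬝ᵥ (Umat (n + 1) s G).mulVec x = (∑ i : Fin (n + 1), q i * x i) ^ 2 := by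
  let r : ℕ → ℝ := fun j => ∑ l ∈ Finset.range (n + 1), q l * q (j + l)
  let H : Matrix (Fin n) (Fin n) ℝ := Matrix.of fun i j =>
    ∑ l ∈ Finset.range n, q (i + (l + 1)) * q (j + (l + 1))
  have hH : Hᵀ = H := by
    ext i j
    simp [H, mul_comm]
  have hform : ∀ y : Fin n → ℝ, y ⬝ᵥ H.mulVec y
      = ∑ l ∈ Finset.range n, (∑ i : Fin n, q (i + (l + 1)) * y i) ^ 2 := by
    intro y
    simp only [dotProduct, mulVec, H, of_apply, sq, Finset.mul_sum,
      Finset.sum_mul]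
    rw [Finset.sum_comm (s := Finset.range n)]
    refine Finset.sum_congr rfl fun i _ => ?_
    rw [Finset.sum_comm]
    refine Finset.sum_congr rfl fun j _ => Finset.sum_congr rfl fun l _ => ?_
    ring
  refine ⟨fun j => 2 * r j - if j = 0 then r 0 else 0,
    Matrix.of fun i j => if i < j then 2 * H i j else if i = j then H i j else 0, ?_, ?_, ?_⟩
  · intro i j h
    simp [h.not_gt, h.ne']
  · intro y
    rw [upper_form H hH, hform]
    positivity
  · intro x
    rw [Umat_form, upper_form H hH, upper_form H hH, hform, hform]
    let f : ℕ → ℝ := fun l => ∑ i : Fin (n + 1), q (i + l) * x i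
    have e1 : ∀ l, ∑ i : Fin n, q (i + (l + 1)) * x i.castSucc = f (l + 1) := by
      intro l
      simp only [f]
      rw [Fin.sum_univ_castSucc]
      simp [hq (n + (l + 1)) (by omega)]
    have e2 : ∀ l, ∑ i : Fin n, q (i + (l + 1)) * x i.succ = f l - q l * x 0 := by
      intro l
      simp only [f]
      rw [Fin.sum_univ_succ]
      have h : ∀ i : Fin n, (i : ℕ) + 1 + l = i + (l + 1) := fun i => by omega
      simp [h]
    have e3 : f n = q n * x 0 := by
      have := e2 n
      rw [Finset.sum_eq_zero fun i _ => by rw [hq _ (by omega), zero_mul]] at this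
      linarith
    have e4 : ∑ i : Fin (n + 1), q i * x i = f 0 := by simp [f]
    have e5 : ∑ j : Fin (n + 1), (2 * r j - if (j : ℕ) = 0 then r 0 else 0) * x j
        = 2 * ∑ l ∈ Finset.range (n + 1), q l * f l - r 0 * x 0 := by
      simp only [sub_mul, Finset.sum_sub_distrib]
      congr 1
      · simp only [r, f, Finset.mul_sum, Finset.sum_mul]
        rw [Finset.sum_comm]
        refine Finset.sum_congr rfl fun j _ => Finset.sum_congr rfl fun l _ => ?_
        ring
      · rw [Fin.sum_univ_succ]
        simp
    have e6 : ∑ l ∈ Finset.range n, (f l - q l * x 0) ^ 2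
        = ∑ l ∈ Finset.range (n + 1), (f l - q l * x 0) ^ 2 := by
      rw [Finset.sum_range_succ, e3]; simp
    have e7 : ∑ l ∈ Finset.range n, f (l + 1) ^ 2
        = ∑ l ∈ Finset.range (n + 1), f l ^ 2 - f 0 ^ 2 := by
      rw [Finset.sum_range_succ']; simp
    have e8 : ∑ l ∈ Finset.range (n + 1), (f l - q l * x 0) ^ 2
        = ∑ l ∈ Finset.range (n + 1), f l ^ 2
          - 2 * x 0 * ∑ l ∈ Finset.range (n + 1), q l * f l + r 0 * x 0 ^ 2 := by
      simp only [r, Finset.mul_sum, Finset.sum_mul, ← Finset.sum_sub_distrib,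
        ← Finset.sum_add_distrib, zero_add]
      refine Finset.sum_congr rfl fun l _ => ?_
      ring
    simp only [e1, e2, e4, e5, e6, e7, e8]
    ring

/-! ### Sums of squares on the unit circle -/

open Polynomial in
/-- The cone of functions of `θ` that are finite sums of squared moduli `|q(e^{iθ})|²`, where the
`q` are real polynomials of degree at most `n`. -/
noncomputable def trigSOS (n : ℕ) : AddSubmonoid (ℝ → ℝ) :=
  AddSubmonoid.closure {f | ∃ q : ℝ[X], q.natDegree ≤ n ∧
    ∀ θ : ℝ, f θ = Complex.normSq (aeval (Complex.exp (θ * Complex.I)) q)}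

open Polynomial in
/-- Every sum of squares is a cosine polynomial with feasible coefficients. -/
lemma exists_feasible_of_trigSOS {n : ℕ} {f : ℝ → ℝ} (hf : f ∈ trigSOS n) :
    ∃ s, Feasible n s ∧ ∀ θ, f θ = ∑ m ∈ Finset.range (n + 1), s m * Real.cos (m * θ) := by
  refine AddSubmonoid.closure_induction ?_ ?_ ?_ hf
  · rintro f ⟨q, hq, hf⟩
    obtain ⟨s, G, hG, hG', hx⟩ := exists_G_of_coeff n q.coeff
      fun i hi => coeff_eq_zero_of_natDegree_lt (by omega)
    refine ⟨s, ⟨G, hG, hG', fun x => by rw [hx]; positivity⟩, fun θ => ?_⟩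
    rw [hf, ← Umat_form_cos_add_sin n s G θ, hx, hx, aeval_eq_sum_range' (Nat.lt_succ_of_le hq),
      Complex.normSq_apply, ← sq, ← sq, Complex.re_sum, Complex.im_sum, Finset.sum_range,
      Finset.sum_range]
    have h : ∀ i : ℕ, Complex.exp (θ * Complex.I) ^ i
        = Complex.exp (((i * θ : ℝ) : ℂ) * Complex.I) := by
      intro i
      rw [← Complex.exp_nat_mul]
      push_cast
      ring_nf
    simp only [h, Complex.smul_re, Complex.smul_im, Complex.exp_ofReal_mul_I_re,
      Complex.exp_ofReal_mul_I_im, smul_eq_mul]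
  · exact ⟨_, feasible_zero n, by simp⟩
  · rintro f g _ _ ⟨s, hs, hs'⟩ ⟨t, ht, ht'⟩
    exact ⟨_, hs.add ht, fun θ => by simp [hs', ht', add_mul, Finset.sum_add_distrib]⟩

lemma trigSOS_mono {m n : ℕ} (h : m ≤ n) : trigSOS m ≤ trigSOS n :=
  AddSubmonoid.closure_mono fun _ ⟨q, hq, hf⟩ => ⟨q, hq.trans h, hf⟩

open Polynomial in
lemma trigSOS_mul {m n : ℕ} (w : ℝ[X]) (hw : w.natDegree ≤ m) {f : ℝ → ℝ} (hf : f ∈ trigSOS n) :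
    (fun θ : ℝ => Complex.normSq (aeval (Complex.exp (θ * Complex.I)) w) * f θ)
      ∈ trigSOS (m + n) := by
  refine AddSubmonoid.closure_induction ?_ ?_ ?_ hf
  · rintro f ⟨q, hq, hf⟩
    refine AddSubmonoid.subset_closure ⟨w * q, natDegree_mul_le_of_le hw hq, fun θ => ?_⟩
    simp only [hf, map_mul]
  · convert (trigSOS (m + n)).zero_mem using 1
    ext θ
    simp
  · intro f g _ _ h1 h2
    convert (trigSOS (m + n)).add_mem h1 h2 using 1
    ext θ
    simp [mul_add]

open Polynomial in
lemma const_mem_trigSOS (n : ℕ) {c : ℝ} (hc : 0 ≤ c) : (fun _ => c) ∈ trigSOS n := by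
  refine AddSubmonoid.subset_closure ⟨C √c, by simp, fun θ => ?_⟩
  simp [Complex.normSq_ofReal, Real.mul_self_sqrt hc]

open Polynomial in
lemma eval_nonneg_of_punctured {q : ℝ[X]} {a : ℝ}
    (h : ∀ x ∈ Set.Icc (-1 : ℝ) 1, x ≠ a → 0 ≤ q.eval x) :
    ∀ x ∈ Set.Icc (-1 : ℝ) 1, 0 ≤ q.eval x := by
  have hcl : IsClosed {x : ℝ | 0 ≤ q.eval x} := isClosed_le continuous_const q.continuous
  have h1 : Set.Ioo (-1 : ℝ) 1 ⊆ closure (Set.Ioo (-1 : ℝ) 1 ∩ {a}ᶜ) :=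
    (dense_compl_singleton a).open_subset_closure_inter isOpen_Ioo
  have h2 : closure (Set.Ioo (-1 : ℝ) 1 ∩ {a}ᶜ) ⊆ {x : ℝ | 0 ≤ q.eval x} :=
    hcl.closure_subset_iff.2 fun x hx => h x (Set.Ioo_subset_Icc_self hx.1) hx.2
  have h3 := hcl.closure_subset_iff.2 (h1.trans h2)
  rwa [closure_Ioo (by norm_num)] at h3

open Polynomial in
/-- Fejér–Riesz in sum-of-squares form, by induction on the degree: subtract the minimum over
`[-1, 1]` and divide out the factor `1 + x`, `1 - x` or `(x - a) ^ 2` belonging to the minimizer. -/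
lemma mem_trigSOS_of_nonneg (n : ℕ) : ∀ p : ℝ[X], p.natDegree ≤ n →
    (∀ x ∈ Set.Icc (-1 : ℝ) 1, 0 ≤ p.eval x) → (fun θ => p.eval (Real.cos θ)) ∈ trigSOS n := by
  induction n using Nat.strong_induction_on with
  | _ n ih =>
  intro p hp hpos
  obtain ⟨a, ha, hmin⟩ := isCompact_Icc.exists_isMinOn (s := Set.Icc (-1 : ℝ) 1)
    ⟨0, by norm_num⟩ p.continuous.continuousOn
  have hmin : ∀ x ∈ Set.Icc (-1 : ℝ) 1, p.eval a ≤ p.eval x := fun x hx => hmin hx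
  have ham := hpos a ha
  obtain ⟨q, hq⟩ : X - C a ∣ p - C (p.eval a) := dvd_iff_isRoot.2 (by simp)
  have hpq : p = C (p.eval a) + (X - C a) * q := by rw [← hq]; ring
  by_cases hq0 : q = 0
  · rw [hpq, hq0]
    simpa using const_mem_trigSOS n ham
  have hdeg : q.natDegree + 1 ≤ n := by
    have h := congrArg natDegree hq
    rw [natDegree_sub_C, natDegree_mul (X_sub_C_ne_zero a) hq0, natDegree_X_sub_C] at h
    omega
  have hev : ∀ x, p.eval x = p.eval a + (x - a) * q.eval x := by
    intro x
    conv_lhs => rw [hpq]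
    simp
  have hnn : ∀ x ∈ Set.Icc (-1 : ℝ) 1, 0 ≤ (x - a) * q.eval x := by
    intro x hx
    have := hmin x hx
    rw [hev x] at this
    linarith
  -- each case reduces to a factor `|w(e^{iθ})|²` times a polynomial covered by the induction
  have finish : ∀ (d : ℕ) (w t : ℝ[X]), w.natDegree ≤ d + 1 → t.natDegree + (d + 1) ≤ n →
      (∀ x ∈ Set.Icc (-1 : ℝ) 1, 0 ≤ t.eval x) →
      (∀ θ : ℝ, Complex.normSq (aeval (Complex.exp (θ * Complex.I)) w) * t.eval (Real.cos θ)
        = (Real.cos θ - a) * q.eval (Real.cos θ)) →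
      (fun θ => p.eval (Real.cos θ)) ∈ trigSOS n := by
    intro d w t hw ht htpos hwt
    have h1 := trigSOS_mul w hw (ih (n - (d + 1)) (by omega) t (by omega) htpos)
    rw [show d + 1 + (n - (d + 1)) = n by omega] at h1
    convert (trigSOS n).add_mem (const_mem_trigSOS n ham) h1 using 1
    ext θ
    simp only [Pi.add_apply]
    rw [hwt, hev]
  have hsc := fun θ => Real.sin_sq_add_cos_sq θ
  rcases eq_or_lt_of_le ha.1 with h1 | h1
  · subst h1
    refine finish 0 (X + 1) (C (1 / 2) * q) (by compute_degree) ?_ ?_ ?_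
    · exact (Nat.add_le_add_right (natDegree_C_mul_le _ _) _).trans hdeg
    · have : ∀ x ∈ Set.Icc (-1 : ℝ) 1, 0 ≤ q.eval x := by
        refine eval_nonneg_of_punctured (a := -1) fun x hx hxa => ?_
        refine nonneg_of_mul_nonneg_right (hnn x hx) ?_
        have := lt_of_le_of_ne hx.1 hxa.symm
        linarith
      intro x hx
      simpa using this x hx
    · intro θ
      simp [Complex.normSq_apply, Complex.exp_ofReal_mul_I_re, Complex.exp_ofReal_mul_I_im]
      linear_combination (q.eval (Real.cos θ) / 2) * hsc θ
  rcases eq_or_lt_of_le ha.2 with h2 | h2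
  · subst h2
    refine finish 0 (X - 1) (C (-1 / 2) * q) (by compute_degree) ?_ ?_ ?_
    · exact (Nat.add_le_add_right (natDegree_C_mul_le _ _) _).trans hdeg
    · refine eval_nonneg_of_punctured (a := 1) fun x hx hxa => ?_
      have h3 := hnn x hx
      have := lt_of_le_of_ne hx.2 hxa
      have h4 : q.eval x ≤ 0 := by
        by_contra! hc
        nlinarith
      simp only [eval_mul, eval_C]
      linarith
    · intro θ
      simp [Complex.normSq_apply, Complex.exp_ofReal_mul_I_re, Complex.exp_ofReal_mul_I_im]
      linear_combination (-q.eval (Real.cos θ) / 2) * hsc θ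
  -- at an interior minimizer the derivative vanishes, so `a` is a double root
  have hqa : q.eval a = 0 := by
    have hloc : IsLocalMin (fun x => p.eval x) a :=
      Filter.eventually_of_mem (Icc_mem_nhds h1 h2) hmin
    have h := hloc.deriv_eq_zero
    rw [Polynomial.deriv, hpq] at h
    simpa using h
  obtain ⟨t, rfl⟩ : X - C a ∣ q := dvd_iff_isRoot.2 hqa
  refine finish 1 (X ^ 2 - C (2 * a) * X + 1) (C (1 / 4) * t) (by compute_degree) ?_ ?_ ?_
  · have ht0 : t ≠ 0 := right_ne_zero_of_mul hq0
    rw [natDegree_mul (X_sub_C_ne_zero a) ht0, natDegree_X_sub_C] at hdeg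
    have := natDegree_C_mul_le (1 / 4 : ℝ) t
    omega
  · refine eval_nonneg_of_punctured (a := a) fun x hx hxa => ?_
    have h3 := hnn x hx
    have h4 : 0 < (x - a) ^ 2 := by
      have := sub_ne_zero.2 hxa
      positivity
    have : 0 ≤ t.eval x := by
      refine nonneg_of_mul_nonneg_right (a := (x - a) ^ 2) ?_ h4
      simp at h3
      linarith
    simpa using this
  · intro θ
    -- `e^{2iθ} - 2a e^{iθ} + 1 = 2 e^{iθ} (cos θ - a)`
    have h5 : aeval (Complex.exp (θ * Complex.I)) (X ^ 2 - C (2 * a) * X + 1 : ℝ[X])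
        = Complex.exp (θ * Complex.I) * ((2 * (Real.cos θ - a) : ℝ) : ℂ) := by
      have h6 := Complex.sin_sq_add_cos_sq (θ : ℂ)
      simp [Complex.exp_mul_I]
      linear_combination -h6 + (Complex.sin θ) ^ 2 * Complex.I_sq
    rw [h5, map_mul, Complex.normSq_eq_norm_sq, Complex.norm_exp_ofReal_mul_I,
      Complex.normSq_ofReal]
    simp
    ring

/-! ### Chebyshev coefficients -/

lemma chebT_eq_eval (m : ℕ) (x : ℝ) : chebT m x = (Polynomial.Chebyshev.T ℝ m).eval x := by
  induction m using Nat.twoStepInduction with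
  | zero => simp [chebT]
  | one => simp [chebT]
  | more n h1 h2 =>
    rw [chebT, h1, h2]
    push_cast
    simp [Polynomial.Chebyshev.T_add_two]

lemma chebT_cos (m : ℕ) (θ : ℝ) : chebT m (Real.cos θ) = Real.cos (m * θ) := by
  rw [chebT_eq_eval, Polynomial.Chebyshev.T_real_cos]
  simp

open Polynomial in
lemma cos_coeff_unique {k : ℕ} {s t : ℕ → ℝ}
    (h : ∀ θ : ℝ, ∑ m ∈ Finset.range k, s m * Real.cos (m * θ)
      = ∑ m ∈ Finset.range k, t m * Real.cos (m * θ)) :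
    ∀ m < k, s m = t m := by
  let S : Polynomial.Sequence ℝ := ⟨fun m => Chebyshev.T ℝ m, fun m => by simp⟩
  have h0 : ∑ m ∈ Finset.range k, (s m - t m) • S m = 0 := by
    refine Polynomial.eq_zero_of_infinite_isRoot _
      ((Set.Icc_infinite (show (-1 : ℝ) < 1 by norm_num)).mono fun x hx => ?_)
    have hx' := h (Real.arccos x)
    simp only [← chebT_cos, Real.cos_arccos hx.1 hx.2, chebT_eq_eval] at hx'
    simp only [Set.mem_ofPred_eq, IsRoot, eval_finsetSum, eval_smul, smul_eq_mul, sub_mul,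
      Finset.sum_sub_distrib]
    exact sub_eq_zero.2 hx'
  intro m hm
  exact sub_eq_zero.1
    (linearIndependent_iff'.1 S.linearIndependent _ _ h0 m (Finset.mem_range.2 hm))

/-- (i) ⇔ (iv): there is an upper triangular PSD matrix `G ∈ ℝ^{(k−1)×(k−1)}` with
`xᵀ U(s,G) x ≥ γ x_1²` for all `x ∈ ℝ^k` if and only if
`Σ_{m=0}^{k−1} s_m T_m(x) ≥ γ` for all `x ∈ [−1,1]`. -/
theorem stmt4 (k : ℕ) (hk : 2 ≤ k) (s : ℕ → ℝ) (γ : ℝ) (hγ : 0 < γ) :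
    (∃ G : Matrix (Fin (k - 1)) (Fin (k - 1)) ℝ,
        (∀ i j : Fin (k - 1), j < i → G i j = 0) ∧
        (∀ y : Fin (k - 1) → ℝ, 0 ≤ y ⬝ᵥ G.mulVec y) ∧
        (∀ x : Fin k → ℝ, γ * (x ⟨0, by omega⟩) ^ 2 ≤ x ⬝ᵥ (Umat k s G).mulVec x)) ↔
      ∀ x ∈ Set.Icc (-1 : ℝ) 1, γ ≤ ∑ m ∈ Finset.range k, s m * chebT m x := by
  obtain ⟨n, rfl⟩ : ∃ n, k = n + 1 := ⟨k - 1, by omega⟩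
  constructor
  · rintro ⟨G, -, -, hG⟩ x hx
    obtain ⟨θ, rfl⟩ : ∃ θ, Real.cos θ = x := ⟨_, Real.cos_arccos hx.1 hx.2⟩
    have h1 := hG fun i => Real.cos ((i : ℕ) * θ)
    have h2 := hG fun i => Real.sin ((i : ℕ) * θ)
    have h3 := Umat_form_cos_add_sin n s G θ
    simp only [chebT_cos, ← h3]
    simp only [Nat.cast_zero, zero_mul, Real.cos_zero, Real.sin_zero] at h1 h2
    exact (by linarith : γ ≤ γ * 1 ^ 2 + γ * 0 ^ 2).trans (add_le_add h1 h2)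
  · intro h
    let p : Polynomial ℝ := ∑ m ∈ Finset.range (n + 1),
      Polynomial.C (s m - if m = 0 then γ else 0) * Polynomial.Chebyshev.T ℝ m
    have hp : ∀ x, p.eval x
        = ∑ m ∈ Finset.range (n + 1), (s m - if m = 0 then γ else 0) * chebT m x := by
      intro x
      simp [p, Polynomial.eval_finsetSum, chebT_eq_eval]
    have hp' : ∀ x, p.eval x = ∑ m ∈ Finset.range (n + 1), s m * chebT m x - γ := by
      intro x
      rw [hp]
      simp only [sub_mul, Finset.sum_sub_distrib]
      congr 1
      rw [Finset.sum_range_succ']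
      simp [chebT]
    have hdeg : p.natDegree ≤ n := by
      refine Polynomial.natDegree_sum_le_of_forall_le _ _ fun m hm => ?_
      refine (Polynomial.natDegree_C_mul_le _ _).trans ?_
      have := Finset.mem_range.1 hm
      rw [Polynomial.Chebyshev.natDegree_T]
      omega
    obtain ⟨t, ⟨G, hG, hG', hGx⟩, ht⟩ := exists_feasible_of_trigSOS
      (mem_trigSOS_of_nonneg n p hdeg fun x hx => by rw [hp']; linarith [h x hx])
    have hst : ∀ m < n + 1, t m = s m - if m = 0 then γ else 0 :=
      cos_coeff_unique fun θ => by
        rw [← ht θ, hp]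
        simp only [chebT_cos]
    refine ⟨G, hG, hG', fun x => ?_⟩
    have h1 := hGx x
    have h2 : ∑ j : Fin (n + 1), t j * x j = ∑ j : Fin (n + 1), s j * x j - γ * x 0 := by
      simp only [hst _ (Fin.is_lt _), sub_mul, Finset.sum_sub_distrib]
      congr 1
      rw [Fin.sum_univ_succ]
      simp
    have h3 := Umat_form n s G x
    rw [Umat_form, h2] at h1
    refine le_of_le_of_eq ?_ h3.symm
    change γ * x 0 ^ 2 ≤ _
    linarith
end

section
/- Let k ≥ 2, s = (s_0,…,s_{k−1})ᵀ ∈ ℝ^k, and γ > 0. Suppose for some integer 1 ≤ r ≤ k there exist vectors p^{(1)},…,p^{(r)} ∈ ℝ^k such that Σ_{ℓ=1}^r Σ_{i=1}^k (p_i^{(ℓ)})² = s_0 − γ and 2Σ_{ℓ=1}^r Σ_{i=1}^{k−m} p_i^{(ℓ)} p_{i+m}^{(ℓ)} = s_m for each m = 1,…,k−1. Then there exists a single vector p = (p_1,…,p_k) ∈ ℝ^k solving the rank-one quadratic system associated with s and γ. -/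
/-!
The claim is the real Fejér–Riesz theorem in coefficient form: a finite sum of autocorrelation
sequences of vectors of length `k` is again the autocorrelation sequence of one such vector.
By induction on the number of vectors it suffices to merge two vectors `p, q` into one.

The merging is an extremal argument. The pairs `(p, q)` supported in `{0, …, k-1}` with a
prescribed total autocorrelation form a compact set, since lag `0` bounds every entry. Take a pair
that maximizes `p 0`. Rotating the pair keeps it in the set and can turn the leading entry into
`√(p 0 ^ 2 + q 0 ^ 2)`, so maximality forces `q 0 = 0`. Once `q 0 = 0`, shifting `q` one place to
the left preserves its autocorrelation and leaves `p` alone, so the new pair is again maximal and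
`q 1 = 0`; continuing, `q = 0`, and `p` alone has the prescribed autocorrelation.
-/

/-- `p = (p 0, …, p (k−1))` solves the rank-one quadratic system associated with `s` and `γ`:
`Σ_{i} p_i² = s_0 − γ` and `2 Σ_i p_i p_{i+m} = s_m` for `m = 1, …, k−1`. -/
def RankOneSystem (k : ℕ) (s : ℕ → ℝ) (γ : ℝ) (p : ℕ → ℝ) : Prop :=
  (∑ i ∈ Finset.range k, (p i) ^ 2 = s 0 - γ) ∧
  ∀ m ∈ Finset.Icc 1 (k - 1), 2 * ∑ i ∈ Finset.range (k - m), p i * p (i + m) = s m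

/-- The lag-`m` autocorrelation of the first `k` entries of `p`. -/
def autocorr (k : ℕ) (p : ℕ → ℝ) (m : ℕ) : ℝ :=
  ∑ i ∈ Finset.range (k - m), p i * p (i + m)

/-- The pairs of vectors supported in `{0, …, k-1}` with total autocorrelation `c`. -/
def pairSet (k : ℕ) (c : ℕ → ℝ) : Set ((ℕ → ℝ) × (ℕ → ℝ)) :=
  {x | (∀ i, k ≤ i → x.1 i = 0 ∧ x.2 i = 0) ∧
    ∀ m, m < k → autocorr k x.1 m + autocorr k x.2 m = c m}

lemma autocorr_congr {k m : ℕ} {p q : ℕ → ℝ} (h : ∀ i, i < k → p i = q i) :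
    autocorr k p m = autocorr k q m := by
  refine Finset.sum_congr rfl fun i hi => ?_
  have hi := Finset.mem_range.mp hi
  rw [h i (by omega), h (i + m) (by omega)]

lemma autocorr_shift {k m : ℕ} (hm : m < k) {q : ℕ → ℝ} (h0 : q 0 = 0) (hk : q k = 0) :
    autocorr k (fun i => q (i + 1)) m = autocorr k q m := by
  have h1 := Finset.sum_range_succ' (fun i => q i * q (i + m)) (k - m)
  have h2 := Finset.sum_range_succ (fun i => q i * q (i + m)) (k - m)
  have h3 : k - m + m = k := by omega
  simp only [h3, hk, h0, mul_zero, zero_mul, add_zero] at h1 h2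
  unfold autocorr
  rw [← h2, h1]
  refine Finset.sum_congr rfl fun i _ => ?_
  rw [add_right_comm]

lemma autocorr_rotate (k m : ℕ) (p q : ℕ → ℝ) {a b : ℝ} (hab : a ^ 2 + b ^ 2 = 1) :
    autocorr k (fun i => a * p i + b * q i) m + autocorr k (fun i => a * q i - b * p i) m
      = autocorr k p m + autocorr k q m := by
  simp only [autocorr, ← Finset.sum_add_distrib]
  refine Finset.sum_congr rfl fun i _ => ?_
  linear_combination (p i * p (i + m) + q i * q (i + m)) * hab

lemma isCompact_pairSet {k : ℕ} (c : ℕ → ℝ) : IsCompact (pairSet k c) := by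
  have hbox : IsCompact (Set.univ.pi fun _ : ℕ => Set.Icc (-(1 + c 0)) (1 + c 0)) :=
    isCompact_univ_pi fun _ => isCompact_Icc
  have hclosed : IsClosed (pairSet k c) := by
    have : pairSet k c = (⋂ i, ⋂ (_ : k ≤ i), {x | x.1 i = 0} ∩ {x | x.2 i = 0}) ∩
        ⋂ m, ⋂ (_ : m < k), {x | autocorr k x.1 m + autocorr k x.2 m = c m} := by
      ext x
      simp [pairSet]
    rw [this]
    refine IsClosed.inter ?_ ?_
    · refine isClosed_iInter fun i => isClosed_iInter fun _ => IsClosed.inter ?_ ?_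
      · exact isClosed_eq (by fun_prop) (by fun_prop)
      · exact isClosed_eq (by fun_prop) (by fun_prop)
    · refine isClosed_iInter fun i => isClosed_iInter fun _ => ?_
      unfold autocorr
      exact isClosed_eq (by fun_prop) (by fun_prop)
  -- For `k = 0` the set is the single pair `(0, 0)`, which the box need not contain.
  rcases Nat.eq_zero_or_pos k with rfl | hk
  · have : pairSet 0 c ⊆ {((0 : ℕ → ℝ), (0 : ℕ → ℝ))} := by
      intro x hx
      exact Prod.ext (funext fun i => (hx.1 i (Nat.zero_le i)).1)
        (funext fun i => (hx.1 i (Nat.zero_le i)).2)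
    exact isCompact_singleton.of_isClosed_subset hclosed this
  refine (hbox.prod hbox).of_isClosed_subset hclosed fun x hx => ?_
  have hc := hx.2 0 hk
  have hnn : ∀ y : ℕ → ℝ, 0 ≤ autocorr k y 0 := fun y =>
    Finset.sum_nonneg fun i _ => mul_self_nonneg _
  have hle : ∀ y : ℕ → ℝ, (∀ i, k ≤ i → y i = 0) → ∀ i, y i * y i ≤ autocorr k y 0 := by
    intro y hy i
    by_cases hi : i < k
    · exact Finset.single_le_sum (f := fun i => y i * y i) (fun j _ => mul_self_nonneg _)
        (by simpa using hi)
    · rw [hy i (by omega), mul_zero]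
      exact hnn y
  have h1 := hnn x.1
  have h2 := hnn x.2
  refine ⟨fun i _ => ?_, fun i _ => ?_⟩
  · have := hle x.1 (fun i hi => (hx.1 i hi).1) i
    constructor <;> nlinarith
  · have := hle x.2 (fun i hi => (hx.1 i hi).2) i
    constructor <;> nlinarith

/-- Maximality of the leading entry of `p` forces `q = 0`: a rotation gives `q 0 = 0`, and the
left shift of `q` then yields another maximal pair, which reduces entry `j + 1` to entry `j`. -/
lemma snd_eq_zero_of_max {k : ℕ} {c p : ℕ → ℝ}
    (hmax : ∀ x ∈ pairSet k c, x.1 0 ≤ p 0) (j : ℕ) :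
    ∀ q, (p, q) ∈ pairSet k c → q j = 0 := by
  have hzero : ∀ q, (p, q) ∈ pairSet k c → q 0 = 0 := by
    intro q hq
    by_contra hne
    have hpos : 0 < p 0 ^ 2 + q 0 ^ 2 := by positivity
    set ρ := √(p 0 ^ 2 + q 0 ^ 2) with hρ
    have hρpos : 0 < ρ := Real.sqrt_pos.mpr hpos
    have hρsq : ρ ^ 2 = p 0 ^ 2 + q 0 ^ 2 := Real.sq_sqrt hpos.le
    have hab : (p 0 / ρ) ^ 2 + (q 0 / ρ) ^ 2 = 1 := by
      field_simp
      exact hρsq.symm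
    have hle := hmax (fun i => p 0 / ρ * p i + q 0 / ρ * q i,
      fun i => p 0 / ρ * q i - q 0 / ρ * p i) ⟨fun i hi => by
        have := hq.1 i hi
        simp only at this
        simp [this.1, this.2], fun m hm => by
        rw [← hq.2 m hm]
        exact autocorr_rotate k m p q hab⟩
    have hval : p 0 / ρ * p 0 + q 0 / ρ * q 0 = ρ := by
      field_simp
      exact hρsq.symm
    simp only [hval] at hle
    have : 0 < q 0 ^ 2 := by positivity
    nlinarith
  induction j with
  | zero => exact hzero
  | succ j ih =>
    intro q hq
    refine ih (fun i => q (i + 1)) ⟨fun i hi => ⟨(hq.1 i hi).1, (hq.1 (i + 1) (by omega)).2⟩,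
      fun m hm => ?_⟩
    rw [← hq.2 m hm]
    exact congrArg _ (autocorr_shift hm (hzero q hq) (hq.1 k le_rfl).2)

lemma exists_autocorr_eq_add (k : ℕ) (p q : ℕ → ℝ) :
    ∃ u, ∀ m, m < k → autocorr k u m = autocorr k p m + autocorr k q m := by
  set c := fun m => autocorr k p m + autocorr k q m with hc
  have hne : (pairSet k c).Nonempty := by
    refine ⟨(fun i => if i < k then p i else 0, fun i => if i < k then q i else 0),
      fun i hi => by simp [hi], fun m _ => ?_⟩
    exact congrArg₂ _ (autocorr_congr fun i hi => by simp [hi])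
      (autocorr_congr fun i hi => by simp [hi])
  obtain ⟨⟨u, v⟩, huv, hmax⟩ := (isCompact_pairSet c).exists_isMaxOn hne
    (f := fun x => x.1 0) (by fun_prop)
  have hv : v = 0 := funext fun j => snd_eq_zero_of_max (fun x hx => hmax hx) j v huv
  refine ⟨u, fun m hm => ?_⟩
  have := huv.2 m hm
  simpa [hv, hc, autocorr] using this

lemma exists_autocorr_eq_sum (k r : ℕ) (P : Fin r → ℕ → ℝ) :
    ∃ u, ∀ m, m < k → autocorr k u m = ∑ l, autocorr k (P l) m := by
  induction r with
  | zero => exact ⟨0, fun m _ => by simp [autocorr]⟩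
  | succ r ih =>
    obtain ⟨u, hu⟩ := ih fun l => P l.succ
    obtain ⟨v, hv⟩ := exists_autocorr_eq_add k (P 0) u
    exact ⟨v, fun m hm => by rw [hv m hm, hu m hm, Fin.sum_univ_succ]⟩

/-- If for some `1 ≤ r ≤ k` there are vectors `p⁽¹⁾, …, p⁽ʳ⁾ ∈ ℝ^k` with
`Σ_ℓ Σ_i (p_i⁽ˡ⁾)² = s_0 − γ` and `2 Σ_ℓ Σ_i p_i⁽ˡ⁾ p_{i+m}⁽ˡ⁾ = s_m` for `m = 1, …, k−1`,
then a single vector `p ∈ ℝ^k` solves the rank-one quadratic system associated with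
`s` and `γ`. -/
theorem stmt6 (k r : ℕ) (hk : 2 ≤ k) (hr1 : 1 ≤ r) (hrk : r ≤ k)
    (s : ℕ → ℝ) (γ : ℝ) (hγ : 0 < γ) (P : Fin r → ℕ → ℝ)
    (h0 : ∑ l : Fin r, ∑ i ∈ Finset.range k, (P l i) ^ 2 = s 0 - γ)
    (hm : ∀ m ∈ Finset.Icc 1 (k - 1),
      2 * ∑ l : Fin r, ∑ i ∈ Finset.range (k - m), P l i * P l (i + m) = s m) :
    ∃ p : ℕ → ℝ, RankOneSystem k s γ p := by
  obtain ⟨u, hu⟩ := exists_autocorr_eq_sum k r P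
  refine ⟨u, ?_, fun m hmem => ?_⟩
  · rw [← h0]
    simpa [autocorr, pow_two] using hu 0 (by omega)
  · rw [← hm m hmem]
    have := Finset.mem_Icc.mp hmem
    exact congrArg _ (hu m (by omega))
end

section
/- The minimum over x ∈ [−1,1] of the polynomial 1 − (7/6)x + (13/6)x² − x³ equals 664/729 − 43√43/2916. (This polynomial is the real-valued generating polynomial T(x; a^{(4)}) of the IMEX-BDF4 method, with a^{(4)} = (25/12, −23/12, 13/12, −1/4).) -/
/-- The minimum over `x ∈ [−1,1]` of `1 − (7/6)x + (13/6)x² − x³` equals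
`664/729 − 43√43/2916`; this polynomial is the generating polynomial `T(x; a⁽⁴⁾)` of
IMEX-BDF4, with `a⁽⁴⁾ = (25/12, −23/12, 13/12, −1/4)`. -/
theorem stmt10 :
    IsLeast ((fun x : ℝ => 1 - 7/6 * x + 13/6 * x ^ 2 - x ^ 3) '' Set.Icc (-1) 1)
      (664/729 - 43 * Real.sqrt 43 / 2916) ∧
    ∀ x : ℝ, 1 - 7/6 * x + 13/6 * x ^ 2 - x ^ 3
      = 25/12 * chebT 0 x + (-23/12) * chebT 1 x + 13/12 * chebT 2 x + (-1/4) * chebT 3 x := by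
  have hs : Real.sqrt 43 ^ 2 = 43 := Real.sq_sqrt (by norm_num)
  have h6 : 6 < Real.sqrt 43 := Real.lt_sqrt_of_sq_lt (by norm_num)
  have h7 : Real.sqrt 43 < 7 := (Real.sqrt_lt' (by norm_num)).2 (by norm_num)
  refine ⟨⟨⟨(13 - Real.sqrt 43) / 18, ⟨by linarith, by linarith⟩, ?_⟩, ?_⟩, ?_⟩
  · generalize Real.sqrt 43 = s at *
    linear_combination (s / 5832) * hs
  · rintro _ ⟨x, ⟨_, hx⟩, rfl⟩
    have key : 0 ≤ (x - (13 - Real.sqrt 43) / 18) ^ 2 * (13 / 18 + Real.sqrt 43 / 9 - x) :=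
      mul_nonneg (sq_nonneg _) (by linarith)
    generalize Real.sqrt 43 = s at *
    have hfac : 1 - 7/6 * x + 13/6 * x ^ 2 - x ^ 3 - (664/729 - 43 * s / 2916)
        = (x - (13 - s) / 18) ^ 2 * (13 / 18 + s / 9 - x) := by
      linear_combination (-x / 108 - s / 2916 + 13 / 1944) * hs
    show 664/729 - 43 * s / 2916 ≤ 1 - 7/6 * x + 13/6 * x ^ 2 - x ^ 3
    linarith
  · intro x
    simp only [chebT]
    ring
end

section
/- For every x ∈ [−1,1], the polynomial 1/5 + (13/30)x + (89/30)x² − (21/5)x³ + (8/5)x⁴ is strictly positive. (This polynomial is the real-valued generating polynomial T(x; a^{(5)}) of the IMEX-BDF5 method, with a^{(5)} = (137/60, −163/60, 137/60, −21/20, 1/5).) -/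
/-- For every `x ∈ [−1,1]`, the polynomial `1/5 + (13/30)x + (89/30)x² − (21/5)x³ + (8/5)x⁴`
is strictly positive; this polynomial is the generating polynomial `T(x; a⁽⁵⁾)` of
IMEX-BDF5, with `a⁽⁵⁾ = (137/60, −163/60, 137/60, −21/20, 1/5)`. -/
theorem stmt11 :
    (∀ x ∈ Set.Icc (-1 : ℝ) 1,
      0 < 1/5 + 13/30 * x + 89/30 * x ^ 2 - 21/5 * x ^ 3 + 8/5 * x ^ 4) ∧
    ∀ x : ℝ, 1/5 + 13/30 * x + 89/30 * x ^ 2 - 21/5 * x ^ 3 + 8/5 * x ^ 4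
      = 137/60 * chebT 0 x + (-163/60) * chebT 1 x + 137/60 * chebT 2 x
        + (-21/20) * chebT 3 x + 1/5 * chebT 4 x := by
  refine ⟨fun x _ => ?_, fun x => ?_⟩
  · rcases le_total 0 x with hx | hx
    · -- For `x ≥ 0` the last three terms are `x²` times a quadratic of negative discriminant.
      have hq : 0 ≤ x ^ 2 * (8/5 * (x - 21/16) ^ 2 + 101/480) := by positivity
      nlinarith [hq]
    · -- For `x ≤ 0` the cubic and quartic terms are nonnegative, and the remaining quadratic
      -- has negative discriminant.
      have h3 : 0 ≤ x ^ 2 * (-x) := mul_nonneg (sq_nonneg x) (neg_nonneg.mpr hx)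
      have h4 : 0 ≤ x ^ 4 := by positivity
      nlinarith [h3, h4, sq_nonneg (x + 13/178)]
  · simp only [chebT]
    ring
end

section
/- Let a = (2617/200, −107/5, 1913/120, −1277/120, 83/15, −911/600) be the reformulated coefficient vector a^{(6)} of the sixth-order IMEX-LMM. Then the minimum over x ∈ [−1,1] of Σ_{m=0}^{5} a_m T_m(x) equals 1; in particular Σ_{m=0}^{5} a_m T_m(x) ≥ 1 for all x ∈ [−1,1]. -/
/-- The reformulated coefficient vector `a⁽⁶⁾` of the sixth-order IMEX-LMM. -/
noncomputable def aLMM6 : Fin 6 → ℝ :=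
  ![2617/200, -107/5, 1913/120, -1277/120, 83/15, -911/600]

lemma sum_eq (x : ℝ) : ∑ m : Fin 6, aLMM6 m * chebT (m : ℕ) x =
    1 + (1 - x) * ((850 - 7895 * (1 - x) + 23420 * (1 - x) ^ 2 - 23160 * (1 - x) ^ 3
      + 7288 * (1 - x) ^ 4) / 300) := by
  simp [Fin.sum_univ_succ, aLMM6, chebT]
  ring

/-- The quartic cofactor (scaled by `300`) is globally positive. -/
lemma quartic_pos (y : ℝ) :
    0 < 850 - 7895 * y + 23420 * y ^ 2 - 23160 * y ^ 3 + 7288 * y ^ 4 := by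
  -- The constant term `620` is the free parameter of the Gram matrix, chosen to make the
  -- remaining quadratic positive definite; `7 / 60` is approximately the vertex of that quadratic.
  nlinarith [sq_nonneg (1822 * y ^ 2 - 2895 * y + 620), sq_nonneg (y - 7 / 60), sq_nonneg y]

/-- The minimum over `x ∈ [−1,1]` of `Σ_{m=0}^{5} a_m⁽⁶⁾ T_m(x)` equals `1`;
in particular `Σ_{m=0}^{5} a_m⁽⁶⁾ T_m(x) ≥ 1` for all `x ∈ [−1,1]`. -/
theorem stmt15 :
    IsLeast ((fun x : ℝ => ∑ m : Fin 6, aLMM6 m * chebT (m : ℕ) x) '' Set.Icc (-1) 1) 1 ∧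
    ∀ x ∈ Set.Icc (-1 : ℝ) 1, 1 ≤ ∑ m : Fin 6, aLMM6 m * chebT (m : ℕ) x := by
  have lower_bound : ∀ x ∈ Set.Icc (-1 : ℝ) 1,
      1 ≤ ∑ m : Fin 6, aLMM6 m * chebT (m : ℕ) x := by
    intro x hx
    rw [sum_eq]
    have hy : 0 ≤ 1 - x := by linarith [hx.2]
    have hq := quartic_pos (1 - x)
    exact le_add_of_nonneg_right (mul_nonneg hy (by linarith))
  refine ⟨⟨⟨1, by norm_num, ?_⟩, ?_⟩, lower_bound⟩
  · simp only [sum_eq]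
    norm_num
  · rintro _ ⟨x, hx, rfl⟩
    exact lower_bound x hx
end

section
/- Let b = (1381/288, 13963/3600, −1007/600, −4067/3600, 5791/7200, 23/100) be the reformulated coefficient vector b^{(6)} of the sixth-order IMEX-LMM. Then Σ_{m=0}^{5} b_m T_m(x) > 0 for all x ∈ [−1,1]. -/
/-- The reformulated coefficient vector `b⁽⁶⁾` of the sixth-order IMEX-LMM. -/
noncomputable def bLMM6 : Fin 6 → ℝ :=
  ![1381/288, 13963/3600, -1007/600, -4067/3600, 5791/7200, 23/100]

/-- A quintic form with positive coefficients in `u, v ≥ 0`, not both zero, is positive. With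
`u = x - l` and `v = r - x`, this is the Bernstein positivity criterion on `[l, r]`. -/
lemma bernstein_five_pos {c₀ c₁ c₂ c₃ c₄ c₅ u v : ℝ} (h₀ : 0 < c₀) (h₁ : 0 < c₁) (h₂ : 0 < c₂)
    (h₃ : 0 < c₃) (h₄ : 0 < c₄) (h₅ : 0 < c₅) (hu : 0 ≤ u) (hv : 0 ≤ v) (huv : 0 < u + v) :
    0 < c₀ * v ^ 5 + 5 * c₁ * (u * v ^ 4) + 10 * c₂ * (u ^ 2 * v ^ 3)
      + 10 * c₃ * (u ^ 3 * v ^ 2) + 5 * c₄ * (u ^ 4 * v) + c₅ * u ^ 5 := by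
  rcases hu.lt_or_eq with hu' | rfl
  · positivity
  · have hv' : 0 < v := by linarith
    positivity

lemma sum_eq_monomial (x : ℝ) : ∑ m : Fin 6, bLMM6 m * chebT (m : ℕ) x =
    (6550 + 7576 * x - 8812 * x ^ 2 - 8207 * x ^ 3 + 5791 * x ^ 4 + 3312 * x ^ 5) / 900 := by
  simp [Fin.sum_univ_succ, bLMM6, chebT]
  ring

/-- `Σ_{m=0}^{5} b_m⁽⁶⁾ T_m(x) > 0` for all `x ∈ [−1,1]`. -/
theorem stmt16 :
    ∀ x ∈ Set.Icc (-1 : ℝ) 1, 0 < ∑ m : Fin 6, bLMM6 m * chebT (m : ℕ) x := by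
  rintro x ⟨hl, hr⟩
  rw [sum_eq_monomial]
  refine div_pos ?_ (by norm_num)
  -- The `cᵢ` below are the Bernstein coefficients; the final `linarith` expands the form, which is
  -- `q x` times the fifth power of the interval length.
  rcases le_total x (-1 / 2) with h | h
  · have key := bernstein_five_pos (c₀ := 848) (c₁ := 491 / 2) (c₂ := 631 / 8)
      (c₃ := 29599 / 80) (c₄ := 80487 / 80) (c₅ := 29493 / 16) (u := x + 1) (v := -1 / 2 - x)
      (by norm_num) (by norm_num) (by norm_num) (by norm_num) (by norm_num) (by norm_num)
      (by linarith) (by linarith) (by linarith)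
    ring_nf at key ⊢
    linarith
  · have key := bernstein_five_pos (c₀ := 29493 / 16) (c₁ := 348399 / 80) (c₂ := 694143 / 80)
      (c₃ := 436977 / 40) (c₄ := 9387 / 2) (c₅ := 6210) (u := x + 1 / 2) (v := 1 - x)
      (by norm_num) (by norm_num) (by norm_num) (by norm_num) (by norm_num) (by norm_num)
      (by linarith) (by linarith) (by linarith)
    ring_nf at key ⊢
    linarith
end
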